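/- arXiv:1610.00179 — 6 statements merged into one kernel-verified Lean document; each statement's English description precedes it below -/
import Mathlib

section
/- If a b-path P in a bidirected graph contains a positive cycle C (as a consecutive closed subchain), then P = C. -/
/-- A signed vertex `x^α` : a vertex together with a sign in `ℤˣ`. -/
abbrev SV (V : Type) := V × ℤˣ

/-- A dart : an ordered signed edge `(x^α, y^β)`, traversed from `x` (entered with
half-edge sign `α`) to `y` (left with half-edge sign `β`). -/
abbrev BDart (V : Type) := SV V × SV V

/-- A bidirected graph on the vertex set `V`, given as its set of (unordered) signed
edges `{x^α, y^β}`; the half-edge of such an edge at `x` has sign `α` and the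
half-edge at `y` has sign `β`. -/
abbrev BGraph (V : Type) := Set (Sym2 (SV V))

/-- `IsWalk G x l y` : the list of darts `l` forms a chain from `x` to `y` in `G`. -/
def IsWalk {V : Type} (G : BGraph V) : V → List (BDart V) → V → Prop
  | x, [], y => x = y
  | x, d :: l, y => d.1.1 = x ∧ Sym2.mk d.1 d.2 ∈ G ∧ IsWalk G d.2.1 l y

/-- `IsBWalk G x α l y β` : `l` is a b-walk from `x^α` to `y^β` : a nonempty chain
from `x` to `y` whose first half-edge sign at `x` is `α`, whose last half-edge sign
at `y` is `β`, and such that at every internal vertex occurrence the two incident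
half-edge signs sum to `0`. -/
def IsBWalk {V : Type} (G : BGraph V) (x : V) (α : ℤˣ) (l : List (BDart V)) (y : V)
    (β : ℤˣ) : Prop :=
  l ≠ [] ∧ IsWalk G x l y ∧ (∀ d ∈ l.head?, d.1.2 = α) ∧ (∀ d ∈ l.getLast?, d.2.2 = β) ∧
    List.Chain' (fun d d' => ((d.2.2 : ℤ) + (d'.1.2 : ℤ) = 0)) l

/-- `IsBPath G x α l y β` : `l` is a b-path from `x^α` to `y^β` : a b-walk from `x^α`
to `y^β` that is minimal, i.e. no proper subsequence of its darts, taken in the same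
order, is a b-walk from `x^α` to `y^β`. -/
def IsBPath {V : Type} (G : BGraph V) (x : V) (α : ℤˣ) (l : List (BDart V)) (y : V)
    (β : ℤˣ) : Prop :=
  IsBWalk G x α l y β ∧ ∀ l', l'.Sublist l → l' ≠ l → ¬ IsBWalk G x α l' y β

/-- The transitive closure `Ft G` : its edges are the edges `{x^α, y^β}` for which
`G` contains a b-path from `x^α` to `y^β`. -/
def Ft {V : Type} (G : BGraph V) : BGraph V :=
  {e | ∃ x α y β l, IsBPath G x α l y β ∧ e = Sym2.mk (x, α) (y, β)}

/-- The transitive closure `ft G H` of the partial graph `H` within `G` : the edges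
of `H` together with every edge `{x^α, y^β}` of `G` for which `H` contains a b-path
from `x^α` to `y^β`. -/
def ft {V : Type} (G H : BGraph V) : BGraph V :=
  H ∪ {e | e ∈ G ∧ ∃ x α y β l, IsBPath H x α l y β ∧ e = Sym2.mk (x, α) (y, β)}

/-- `IsTR G H` : `H` is a transitive reduction of `G` : a partial graph of `G`
minimal with the property `ft G H = G`. -/
def IsTR {V : Type} (G H : BGraph V) : Prop :=
  H ⊆ G ∧ ft G H = G ∧ ∀ H', H' ⊂ H → ft G H' ≠ G

/-- The sign of the edge underlying a dart `(x^α, y^β)` : `σ(e) = -αβ`. -/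
def dartSign {V : Type} (d : BDart V) : ℤˣ := -(d.1.2 * d.2.2)

/-- A cycle at `x` in a bidirected graph : a nonempty closed chain with pairwise
distinct edges and pairwise distinct vertices. -/
def IsCycle {V : Type} (G : BGraph V) (x : V) (l : List (BDart V)) : Prop :=
  l ≠ [] ∧ IsWalk G x l x ∧ (l.map fun d => Sym2.mk d.1 d.2).Nodup ∧ (l.map fun d => d.1.1).Nodup

/-- A bidirected graph is balanced if every cycle is positive. -/
def IsBalanced {V : Type} (G : BGraph V) : Prop :=
  ∀ x l, IsCycle G x l → (l.map dartSign).prod = 1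

/-- A bidirected graph is all positive if every edge has sign `+1`. -/
def IsAllPositive {V : Type} (G : BGraph V) : Prop :=
  ∀ d : BDart V, Sym2.mk d.1 d.2 ∈ G → dartSign d = 1

/- Along a b-walk, the sign required of the next half-edge gets multiplied by the sign of each edge
traversed. A closed subchain of positive sign therefore leaves both the current vertex and the
required sign unchanged, so deleting it leaves a b-walk with the same signed ends, unless nothing is
left. Minimality of a b-path rules out the first case. -/

theorem units_add_eq_zero_iff {R : Type*} [Ring R] {u v : Rˣ} : (u : R) + v = 0 ↔ v = -u := by
  rw [add_eq_zero_iff_neg_eq, ← Units.val_neg, Units.val_inj, eq_comm]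

section

variable {V : Type} {G : BGraph V} {x x' y y' v : V} {α β : ℤˣ} {s t : SV V} {d d' : BDart V}
  {l l' l₁ c l₂ : List (BDart V)}

theorem IsWalk.source_unique (h : IsWalk G x l y) (h' : IsWalk G x' l y') (hl : l ≠ []) :
    x = x' := by
  cases l with
  | nil => contradiction
  | cons d l => exact h.1.symm.trans h'.1

theorem IsWalk.target_unique (h : IsWalk G x l y) (h' : IsWalk G x l y') : y = y' := by
  induction l generalizing x with
  | nil => exact h.symm.trans h'
  | cons d l ih => exact ih h.2.2 h'.2.2

theorem isBWalk_iff_isChain :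
    IsBWalk G x α l y β ↔ l ≠ [] ∧ IsWalk G x l y ∧ (∀ d ∈ l.head?, d.1.2 = α) ∧
      (∀ d ∈ l.getLast?, d.2.2 = β) ∧ l.IsChain fun d d' => d'.1.2 = -d.2.2 := by
  simp only [← units_add_eq_zero_iff (R := ℤ)]
  rfl

theorem isBWalk_singleton :
    IsBWalk G x α [d] y β ↔ d.1 = (x, α) ∧ Sym2.mk d.1 d.2 ∈ G ∧ d.2 = (y, β) := by
  rw [Prod.ext_iff (x := d.1), Prod.ext_iff (x := d.2)]
  simp only [isBWalk_iff_isChain, IsWalk, ne_eq, List.cons_ne_nil, not_false_eq_true, true_and,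
    List.head?_cons, List.getLast?_singleton, Option.mem_def, Option.some.injEq, forall_eq',
    List.isChain_singleton, and_true]
  tauto

theorem isBWalk_cons_cons :
    IsBWalk G x α (d :: d' :: l) y β ↔
      d.1 = (x, α) ∧ Sym2.mk d.1 d.2 ∈ G ∧ IsBWalk G d.2.1 (-d.2.2) (d' :: l) y β := by
  rw [Prod.ext_iff]
  simp only [isBWalk_iff_isChain, IsWalk, ne_eq, List.cons_ne_nil, not_false_eq_true, true_and,
    List.head?_cons, List.getLast?_cons_cons, Option.mem_def, Option.some.injEq, forall_eq',
    List.isChain_cons_cons]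
  tauto

theorem IsBPath.eq_of_sublist (h : IsBPath G x α l y β) (hl : l'.Sublist l)
    (h' : IsBWalk G x α l' y β) : l' = l :=
  by_contra fun hne => h.2 l' hl hne h'

theorem mul_dartSign (d : BDart V) : d.1.2 * dartSign d = -d.2.2 := by
  rw [dartSign, mul_neg, ← mul_assoc, Int.units_mul_self, one_mul]

/-- A b-walk as a walk on signed vertices, the sign at a vertex being the one required of the next
half-edge; hence a dart `(x^α, y^β)` leads from `(x, α)` to `(y, -β)`. The empty walk, which is not
a b-walk, is allowed so that signed walks split at every position. -/
def IsSignedWalk {V : Type} (G : BGraph V) : SV V → List (BDart V) → SV V → Prop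
  | s, [], t => s = t
  | s, d :: l, t => d.1 = s ∧ Sym2.mk d.1 d.2 ∈ G ∧ IsSignedWalk G (d.2.1, -d.2.2) l t

theorem isBWalk_iff_isSignedWalk :
    IsBWalk G x α l y β ↔ l ≠ [] ∧ IsSignedWalk G (x, α) l (y, -β) := by
  induction l generalizing x α with
  | nil => simp only [IsBWalk, ne_eq, not_true_eq_false, false_and]
  | cons d l ih =>
    cases l with
    | nil => simp [isBWalk_singleton, IsSignedWalk, Prod.ext_iff]
    | cons d' l => simp [isBWalk_cons_cons, ih, IsSignedWalk]

theorem isSignedWalk_append :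
    IsSignedWalk G s (l ++ l') t ↔ ∃ u, IsSignedWalk G s l u ∧ IsSignedWalk G u l' t := by
  induction l generalizing s with
  | nil => simp only [List.nil_append, IsSignedWalk, exists_eq_left']
  | cons d l ih => simp only [List.cons_append, IsSignedWalk, ih, and_assoc, exists_and_left]

theorem IsSignedWalk.isWalk (h : IsSignedWalk G s l t) : IsWalk G s.1 l t.1 := by
  induction l generalizing s with
  | nil => exact congrArg Prod.fst h
  | cons d l ih => exact ⟨congrArg Prod.fst h.1, h.2.1, ih (s := (d.2.1, -d.2.2)) h.2.2⟩

theorem IsSignedWalk.sign_target (h : IsSignedWalk G s l t) :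
    t.2 = s.2 * (l.map dartSign).prod := by
  induction l generalizing s with
  | nil => rw [List.map_nil, List.prod_nil, mul_one, show s = t from h]
  | cons d l ih =>
    obtain ⟨rfl, -, h⟩ := h
    rw [List.map_cons, List.prod_cons, ← mul_assoc, mul_dartSign, ih h]

theorem IsSignedWalk.source_eq_target (h : IsSignedWalk G s c t) (hne : c ≠ [])
    (hclosed : IsWalk G v c v) (hpos : (c.map dartSign).prod = 1) : s = t := by
  have hs : s.1 = v := h.isWalk.source_unique hclosed hne
  have ht : t.1 = v := h.isWalk.target_unique (hs ▸ hclosed)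
  have hsign : t.2 = s.2 := by rw [h.sign_target, hpos, mul_one]
  exact Prod.ext (hs.trans ht.symm) hsign.symm

theorem IsBWalk.remove_positive_closed (h : IsBWalk G x α (l₁ ++ c ++ l₂) y β) (hne : c ≠ [])
    (hclosed : IsWalk G v c v) (hpos : (c.map dartSign).prod = 1) (hrest : l₁ ++ l₂ ≠ []) :
    IsBWalk G x α (l₁ ++ l₂) y β := by
  obtain ⟨u, h, h₂⟩ := isSignedWalk_append.1 (isBWalk_iff_isSignedWalk.1 h).2
  obtain ⟨w, h₁, hc⟩ := isSignedWalk_append.1 h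
  obtain rfl : w = u := hc.source_eq_target hne hclosed hpos
  exact isBWalk_iff_isSignedWalk.2 ⟨hrest, isSignedWalk_append.2 ⟨w, h₁, h₂⟩⟩

theorem stmt5_general (hP : IsBPath G x α l y β) (hsplit : l = l₁ ++ c ++ l₂) (hne : c ≠ [])
    (hclosed : IsWalk G v c v) (hpos : (c.map dartSign).prod = 1) : l = c := by
  subst hsplit
  suffices hrest : l₁ ++ l₂ = [] by
    obtain ⟨rfl, rfl⟩ := List.append_eq_nil_iff.1 hrest
    rw [List.nil_append, List.append_nil]
  by_contra hrest
  have hsub : (l₁ ++ l₂).Sublist (l₁ ++ c ++ l₂) :=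
    (List.sublist_append_left l₁ c).append_right l₂
  have heq : l₁ ++ l₂ = l₁ ++ c ++ l₂ :=
    hP.eq_of_sublist hsub (hP.1.remove_positive_closed hne hclosed hpos hrest)
  exact hne (List.self_eq_append_right.1 (List.append_cancel_right heq))

end

/-- If a b-path `P` in a bidirected graph contains a positive cycle `C`
as a consecutive closed subchain, then `P = C`. -/
theorem stmt5 {V : Type} [Fintype V] (G : BGraph V) (x y v : V) (α β : ℤˣ)
    (l l₁ c l₂ : List (BDart V)) (hP : IsBPath G x α l y β)
    (hsplit : l = l₁ ++ c ++ l₂) (hC : IsCycle G v c)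
    (hpos : (c.map dartSign).prod = 1) : l = c :=
  stmt5_general hP hsplit hC.1 hC.2.1 hpos
end

section
/- The transitive closure operator Ft on bidirected graphs is an abstract closure operator: (i) G_τ is a partial graph of Ft(G_τ); (ii) if H_τ is a partial graph of G_τ, then Ft(H_τ) is a partial graph of Ft(G_τ); (iii) Ft(Ft(G_τ)) = Ft(G_τ). -/
/-!
A bidirected graph `G` is encoded by a digraph on the signed vertices, its double cover: an edge
`{x^α, y^β}` gives the two arcs `x^α ⟶ y^(-β)` and `y^β ⟶ x^(-α)`. Since consecutive half-edges of a
b-walk have opposite signs at their common vertex, b-walks from `x^α` to `y^β` in `G` are exactly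
nonempty directed walks from `x^α` to `y^(-β)` in the double cover, and a shortest b-walk is a
b-path. So the double cover of `Ft G` is the transitive closure of the double cover of `G`, and the
closure axioms are those of the transitive closure of binary relations.
-/

open Relation

section DoubleCover

variable {V : Type} {G H : BGraph V}

/-- The opposite `x^(-α)` of the signed vertex `x^α`. -/
def opposite (a : SV V) : SV V := (a.1, -a.2)

@[simp]
theorem opposite_opposite (a : SV V) : opposite (opposite a) = a := by
  simp [opposite]

/-- The arc relation of the double cover of `G`. The head of an arc carries the sign with which a
b-walk must leave it, so that composable edges of `G` become consecutive arcs. -/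
def Arc (G : BGraph V) (a b : SV V) : Prop := s(a, opposite b) ∈ G

theorem arc_opposite_right_iff {a b : SV V} : Arc G a (opposite b) ↔ s(a, b) ∈ G := by
  simp only [Arc, opposite_opposite]

theorem Arc.opposite_swap {a b : SV V} (h : Arc G a b) : Arc G (opposite b) (opposite a) := by
  rwa [arc_opposite_right_iff, Sym2.eq_swap]

theorem transGen_arc_opposite_swap {a b : SV V} (h : TransGen (Arc G) a b) :
    TransGen (Arc G) (opposite b) (opposite a) :=
  TransGen.lift opposite (fun _ _ hab => Arc.opposite_swap hab) _ _ (transGen_swap.mpr h)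

theorem arc_le_arc_iff : Arc G ≤ Arc H ↔ G ⊆ H := by
  refine ⟨fun h e => ?_, fun h a b hab => h hab⟩
  induction e with
  | _ a b =>
    rw [← arc_opposite_right_iff, ← arc_opposite_right_iff]
    exact h a (opposite b)

theorem arc_injective : Function.Injective (Arc (V := V)) := fun _ _ h =>
  (arc_le_arc_iff.mp h.le).antisymm (arc_le_arc_iff.mp h.ge)

theorem units_coe_add_eq_zero_iff {R : Type*} [Ring R] {u v : Rˣ} :
    (u : R) + (v : R) = 0 ↔ v = -u := by
  rw [add_comm, add_eq_zero_iff_eq_neg, ← Units.val_neg, Units.val_inj]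

theorem isBWalk_iff {x y : V} {α β : ℤˣ} {l : List (BDart V)} :
    IsBWalk G x α l y β ↔
      l ≠ [] ∧ IsWalk G x l y ∧ (∀ d ∈ l.head?, d.1.2 = α) ∧ (∀ d ∈ l.getLast?, d.2.2 = β) ∧
        l.IsChain (fun d d' => d'.1.2 = -d.2.2) := by
  simp only [IsBWalk, units_coe_add_eq_zero_iff]
  rfl

theorem isBWalk_singleton_iff {x y : V} {α β : ℤˣ} {d : BDart V} :
    IsBWalk G x α [d] y β ↔ d.1 = (x, α) ∧ s(d.1, d.2) ∈ G ∧ d.2 = (y, β) := by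
  obtain ⟨⟨u, μ⟩, ⟨v, ν⟩⟩ := d
  simp only [isBWalk_iff, IsWalk, List.head?_cons, List.getLast?_singleton, Option.mem_some_iff,
    forall_eq', List.isChain_singleton, Prod.mk.injEq, ne_eq, List.cons_ne_nil]
  tauto

theorem isBWalk_cons_iff {x y : V} {α β : ℤˣ} {d : BDart V} {l : List (BDart V)} (hl : l ≠ []) :
    IsBWalk G x α (d :: l) y β ↔
      d.1 = (x, α) ∧ s(d.1, d.2) ∈ G ∧ IsBWalk G d.2.1 (-d.2.2) l y β := by
  obtain ⟨d', l, rfl⟩ := List.exists_cons_of_ne_nil hl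
  obtain ⟨⟨u, μ⟩, e⟩ := d
  simp only [isBWalk_iff, IsWalk, List.head?_cons, List.getLast?_cons_cons, Option.mem_some_iff,
    forall_eq', List.isChain_cons_cons, Prod.mk.injEq, ne_eq, List.cons_ne_nil]
  tauto

theorem IsBWalk.transGen_arc {x y : V} {α β : ℤˣ} {l : List (BDart V)}
    (h : IsBWalk G x α l y β) : TransGen (Arc G) (x, α) (opposite (y, β)) := by
  induction l generalizing x α with
  | nil => exact absurd rfl h.1
  | cons d l ih =>
    obtain rfl | hl := eq_or_ne l []
    · obtain ⟨hd, hG, hy⟩ := isBWalk_singleton_iff.mp h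
      rw [hd, hy] at hG
      exact .single (arc_opposite_right_iff.mpr hG)
    · obtain ⟨hd, hG, hwalk⟩ := (isBWalk_cons_iff hl).mp h
      rw [hd] at hG
      exact .head (arc_opposite_right_iff.mpr hG) (ih hwalk)

theorem exists_isBWalk_of_transGen_arc {a b : SV V} (h : TransGen (Arc G) a b) :
    ∃ l, IsBWalk G a.1 a.2 l b.1 (-b.2) := by
  induction h using TransGen.head_induction_on with
  | single h => exact ⟨[(_, opposite b)], isBWalk_singleton_iff.mpr ⟨rfl, h, rfl⟩⟩
  | @head a c h _ ih =>
    obtain ⟨l, hl⟩ := ih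
    refine ⟨(a, opposite c) :: l, (isBWalk_cons_iff hl.1).mpr ⟨rfl, h, ?_⟩⟩
    simpa only [opposite, neg_neg] using hl

theorem IsBWalk.exists_isBPath {x y : V} {α β : ℤˣ} {l : List (BDart V)}
    (h : IsBWalk G x α l y β) : ∃ l', IsBPath G x α l' y β := by
  obtain ⟨p, hp, hmin⟩ :=
    (measure List.length).wf.has_min {l | IsBWalk G x α l y β} ⟨l, h⟩
  refine ⟨p, hp, fun l' hsub hne hl' => hmin l' hl' ?_⟩
  exact hsub.length_le.lt_of_ne fun hlen => hne (hsub.eq_of_length hlen)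

theorem mk_mem_Ft_iff {a b : SV V} : s(a, b) ∈ Ft G ↔ TransGen (Arc G) a (opposite b) := by
  constructor
  · rintro ⟨x, α, y, β, l, hpath, he⟩
    have hxy := hpath.1.transGen_arc
    obtain ⟨rfl, rfl⟩ | ⟨rfl, rfl⟩ := Sym2.eq_iff.mp he
    · exact hxy
    · simpa only [opposite_opposite] using transGen_arc_opposite_swap hxy
  · intro h
    obtain ⟨l, hl⟩ := exists_isBWalk_of_transGen_arc h
    simp only [opposite, neg_neg] at hl
    obtain ⟨p, hp⟩ := hl.exists_isBPath
    exact ⟨a.1, a.2, b.1, b.2, p, hp, rfl⟩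

theorem arc_Ft (G : BGraph V) : Arc (Ft G) = TransGen (Arc G) := by
  ext a b
  rw [Arc, mk_mem_Ft_iff, opposite_opposite]

theorem subset_Ft (G : BGraph V) : G ⊆ Ft G := by
  rw [← arc_le_arc_iff, arc_Ft]
  exact fun _ _ => TransGen.single

theorem Ft_mono : Monotone (Ft (V := V)) := fun G H h => by
  rw [← arc_le_arc_iff, arc_Ft, arc_Ft]
  exact TransGen.mono (arc_le_arc_iff.mpr h)

theorem Ft_Ft (G : BGraph V) : Ft (Ft G) = Ft G :=
  arc_injective <| by rw [arc_Ft, arc_Ft, transGen_eq_self]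

theorem stmt6_general (G H : BGraph V) :
    G ⊆ Ft G ∧ (H ⊆ G → Ft H ⊆ Ft G) ∧ Ft (Ft G) = Ft G :=
  ⟨subset_Ft G, fun h => Ft_mono h, Ft_Ft G⟩

end DoubleCover

/-- The transitive closure operator `Ft` is an abstract closure
operator : (i) `G` is a partial graph of `Ft G`; (ii) if `H` is a partial graph of
`G` then `Ft H` is a partial graph of `Ft G`; (iii) `Ft (Ft G) = Ft G`. -/
theorem stmt6 {V : Type} [Fintype V] (G H : BGraph V) :
    G ⊆ Ft G ∧ (H ⊆ G → Ft H ⊆ Ft G) ∧ Ft (Ft G) = Ft G :=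
  stmt6_general G H
end

section
/- For any bidirected graph G_τ and any vertex set X ⊆ V, the transitive closure of the switched graph equals the switched transitive closure: Ft(G_{τ_X}) = (Ft(G_τ))_{τ_X}. -/
open Classical in
/-- Switching a signed vertex : negate its sign exactly when the vertex is in `X`. -/
noncomputable def swv {V : Type} (X : Set V) (p : SV V) : SV V :=
  if p.1 ∈ X then (p.1, -p.2) else p

/-- Switching a bidirected graph by a vertex set `X` : negate the sign of every
half-edge incident with a vertex of `X`. -/
noncomputable def switchB {V : Type} (X : Set V) (G : BGraph V) : BGraph V :=
  (Sym2.map (swv X)) '' G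

/-! A b-walk from `p` to `q` only sees the signed vertices: it is a list of darts, each spanning an
edge, that starts at `p`, ends at `q`, and in which every dart starts at the opposite of the signed
vertex where the previous one ended. Hence an injective map of signed vertices that commutes with
taking opposites transports b-walks, and, since it also transports sublists, b-paths and the
transitive closure. Switching is such a map. -/

theorem forall_sublist_map_iff {α β : Type*} {g : α → β} {l : List α} {P : List β → Prop} :
    (∀ l' : List β, l'.Sublist (l.map g) → P l') ↔ ∀ l' : List α, l'.Sublist l → P (l'.map g) := by
  simp only [List.sublist_map_iff, forall_exists_index, and_imp]
  exact ⟨fun h l' hl' => h _ l' hl' rfl, fun h _ l' hl' heq => heq ▸ h l' hl'⟩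

/-- The opposite `x^{-α}` of a signed vertex `x^α`: a b-walk that arrives at a signed vertex
continues from its opposite. -/
def SV.opp {V : Type} (p : SV V) : SV V := (p.1, -p.2)

section BWalk

variable {V W : Type}

theorem SV.eq_opp_iff {p q : SV V} : q = p.opp ↔ q.1 = p.1 ∧ (p.2 : ℤ) + (q.2 : ℤ) = 0 := by
  rw [SV.opp, Prod.ext_iff, add_comm, add_eq_zero_iff_eq_neg, ← Units.val_neg, Units.val_inj]

theorem isBWalk_def {G : BGraph V} {p q : SV V} {l : List (BDart V)} :
    IsBWalk G p.1 p.2 l q.1 q.2 ↔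
      l ≠ [] ∧ IsWalk G p.1 l q.1 ∧ (∀ d ∈ l.head?, d.1.2 = p.2) ∧
        (∀ d ∈ l.getLast?, d.2.2 = q.2) ∧ l.IsChain fun d e => (d.2.2 : ℤ) + (e.1.2 : ℤ) = 0 :=
  Iff.rfl

theorem isBWalk_singleton_s8 {G : BGraph V} {p q : SV V} {d : BDart V} :
    IsBWalk G p.1 p.2 [d] q.1 q.2 ↔ d.1 = p ∧ s(d.1, d.2) ∈ G ∧ d.2 = q := by
  simp only [isBWalk_def, IsWalk, List.head?_cons, List.getLast?_singleton, Option.mem_some_iff,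
    forall_eq', List.isChain_singleton, ne_eq, List.cons_ne_nil,
    Prod.ext_iff (x := d.1), Prod.ext_iff (x := d.2)]
  tauto

theorem isBWalk_cons_cons_s8 {G : BGraph V} {p q : SV V} {d e : BDart V} {l : List (BDart V)} :
    IsBWalk G p.1 p.2 (d :: e :: l) q.1 q.2 ↔
      d.1 = p ∧ s(d.1, d.2) ∈ G ∧ e.1 = d.2.opp ∧ IsBWalk G e.1.1 e.1.2 (e :: l) q.1 q.2 := by
  simp only [isBWalk_def, IsWalk, List.head?_cons, List.getLast?_cons_cons, Option.mem_some_iff,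
    forall_eq', List.isChain_cons_cons, ne_eq, List.cons_ne_nil, SV.eq_opp_iff,
    Prod.ext_iff (x := d.1)]
  tauto

theorem isBWalk_iff_s8 {G : BGraph V} {p q : SV V} {l : List (BDart V)} :
    IsBWalk G p.1 p.2 l q.1 q.2 ↔
      l.head?.map Prod.fst = some p ∧ l.getLast?.map Prod.snd = some q ∧
        (∀ d ∈ l, s(d.1, d.2) ∈ G) ∧ l.IsChain fun d e => e.1 = d.2.opp := by
  induction l generalizing p with
  | nil => simp [IsBWalk]
  | cons d l ih =>
    cases l with
    | nil =>
      rw [isBWalk_singleton_s8]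
      simp only [List.head?_cons, Option.map_some, Option.some.injEq, List.getLast?_singleton,
        List.forall_mem_singleton, List.isChain_singleton]
      tauto
    | cons e l =>
      rw [isBWalk_cons_cons_s8, ih]
      simp only [List.head?_cons, Option.map_some, Option.some.injEq, List.getLast?_cons_cons,
        List.forall_mem_cons, List.isChain_cons_cons]
      tauto

variable {f : SV V → SV W}

theorem mk_mem_image_sym2Map_iff (hf : Function.Injective f) {G : BGraph V} {p q : SV V} :
    s(f p, f q) ∈ Sym2.map f '' G ↔ s(p, q) ∈ G := by
  rw [← Sym2.map_mk, (Sym2.map.injective hf).mem_set_image]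

theorem isBWalk_map_iff (hf : Function.Injective f) (hopp : Function.Semiconj f SV.opp SV.opp)
    {G : BGraph V} {p q : SV V} {l : List (BDart V)} :
    IsBWalk (Sym2.map f '' G) (f p).1 (f p).2 (l.map (Prod.map f f)) (f q).1 (f q).2 ↔
      IsBWalk G p.1 p.2 l q.1 q.2 := by
  simp only [isBWalk_iff_s8, List.head?_map, List.getLast?_map, Option.map_map,
    Option.map_eq_some_iff, Function.comp_apply, List.forall_mem_map, List.isChain_map,
    Prod.map_fst, Prod.map_snd, mk_mem_image_sym2Map_iff hf, ← hopp.eq, hf.eq_iff]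

theorem isBPath_map_iff (hf : Function.Injective f) (hopp : Function.Semiconj f SV.opp SV.opp)
    {G : BGraph V} {p q : SV V} {l : List (BDart V)} :
    IsBPath (Sym2.map f '' G) (f p).1 (f p).2 (l.map (Prod.map f f)) (f q).1 (f q).2 ↔
      IsBPath G p.1 p.2 l q.1 q.2 := by
  have hmap : Function.Injective (List.map (Prod.map f f)) := (hf.prodMap hf).list_map
  simp only [IsBPath, forall_sublist_map_iff, isBWalk_map_iff hf hopp, hmap.ne_iff]

theorem IsBWalk.exists_eq_map {G : BGraph V} {p q : SV W} {l : List (BDart W)}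
    (h : IsBWalk (Sym2.map f '' G) p.1 p.2 l q.1 q.2) :
    ∃ (p₀ q₀ : SV V) (l₀ : List (BDart V)), p = f p₀ ∧ q = f q₀ ∧ l = l₀.map (Prod.map f f) := by
  obtain ⟨hp, hq, hG, -⟩ := isBWalk_iff_s8.1 h
  have hl : l ∈ Set.range (List.map (Prod.map f f)) := by
    rw [Set.range_list_map]
    intro d hd
    obtain ⟨⟨a, b⟩, -, he : s(f a, f b) = s(d.1, d.2)⟩ := hG d hd
    rcases Sym2.eq_iff.1 he with ⟨ha, hb⟩ | ⟨ha, hb⟩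
    · exact ⟨(a, b), Prod.ext ha hb⟩
    · exact ⟨(b, a), Prod.ext hb ha⟩
  obtain ⟨l₀, rfl⟩ := hl
  simp only [List.head?_map, List.getLast?_map, Option.map_map, Option.map_eq_some_iff] at hp hq
  obtain ⟨d, -, rfl⟩ := hp
  obtain ⟨e, -, rfl⟩ := hq
  exact ⟨d.1, e.2, l₀, rfl, rfl, rfl⟩

theorem Ft_image_sym2Map (hf : Function.Injective f) (hopp : Function.Semiconj f SV.opp SV.opp)
    (G : BGraph V) : Ft (Sym2.map f '' G) = Sym2.map f '' Ft G := by
  apply Set.Subset.antisymm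
  · rintro _ ⟨x, α, y, β, l, h, rfl⟩
    obtain ⟨p, q, l, hp, hq, rfl⟩ := IsBWalk.exists_eq_map (p := (x, α)) (q := (y, β)) h.1
    rw [hp, hq]
    refine ⟨s(p, q), ⟨p.1, p.2, q.1, q.2, l, (isBPath_map_iff hf hopp).1 ?_, rfl⟩, rfl⟩
    rwa [← hp, ← hq]
  · rintro _ ⟨_, ⟨x, α, y, β, l, h, rfl⟩, rfl⟩
    exact ⟨_, _, _, _, _, (isBPath_map_iff (p := (x, α)) (q := (y, β)) hf hopp).2 h, rfl⟩

end BWalk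

section Switching

variable {V : Type} (X : Set V)

theorem swv_involutive : Function.Involutive (swv X) := by
  intro p
  by_cases h : p.1 ∈ X <;> simp [swv, h]

theorem swv_semiconj_opp : Function.Semiconj (swv X) SV.opp SV.opp := by
  intro p
  by_cases h : p.1 ∈ X <;> simp [swv, SV.opp, h]

end Switching

theorem stmt8_general {V : Type} (G : BGraph V) (X : Set V) :
    Ft (switchB X G) = switchB X (Ft G) :=
  Ft_image_sym2Map (swv_involutive X).injective (swv_semiconj_opp X) G

/-- For any bidirected graph `G` and any vertex set `X`, the
transitive closure of the switched graph equals the switched transitive closure. -/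
theorem stmt8 {V : Type} [Fintype V] (G : BGraph V) (X : Set V) :
    Ft (switchB X G) = switchB X (Ft G) :=
  stmt8_general G X
end

section
/- The transitive closure of an all-positive bidirected graph is all positive, and the transitive closure of a balanced bidirected graph is balanced. -/
/-!
The opposite half-edge signs `γ` and `-γ` at an interior vertex of a b-walk have product `-1`, which
cancels the `-1` in the sign of the following edge. Hence a b-walk from `x^α` to `y^β` has sign
`-αβ`, which is the sign of the edge it adds to the transitive closure:
replacing every added edge by such a b-walk turns a walk of `Ft G` into a walk of `G` with the same
ends and the same sign. It remains to see that balance is a property of closed walks rather than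
of cycles. A nonempty closed walk that is not a cycle either repeats a vertex, where it breaks into
two shorter closed walks, or traverses an edge in both directions; deleting both traversals leaves
two shorter closed walks and does not change the sign, because `σ(e)² = 1`.
-/

section Sign

variable {V : Type}

/-- The sign of a chain of darts: the product of the signs of its edges, with multiplicity. -/
def walkSign (l : List (BDart V)) : ℤˣ := (l.map dartSign).prod

@[simp]
theorem walkSign_nil : walkSign ([] : List (BDart V)) = 1 := rfl

@[simp]
theorem walkSign_cons (d : BDart V) (l : List (BDart V)) :
    walkSign (d :: l) = dartSign d * walkSign l := by
  simp only [walkSign, List.map_cons, List.prod_cons]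

@[simp]
theorem walkSign_append (l₁ l₂ : List (BDart V)) :
    walkSign (l₁ ++ l₂) = walkSign l₁ * walkSign l₂ := by
  simp only [walkSign, List.map_append, List.prod_append]

theorem dartSign_swap (d : BDart V) : dartSign d.swap = dartSign d := by
  simp only [dartSign, Prod.fst_swap, Prod.snd_swap, mul_comm]

theorem walkSign_reverse_map_swap (l : List (BDart V)) :
    walkSign (l.map Prod.swap).reverse = walkSign l := by
  have hswap : dartSign ∘ Prod.swap = (dartSign : BDart V → ℤˣ) := funext dartSign_swap
  rw [walkSign, List.map_reverse, List.prod_reverse, List.map_map, hswap, walkSign]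

end Sign

section Walk

variable {V : Type} {G : BGraph V} {x y : V} {l : List (BDart V)}

theorem isWalk_append {l₁ l₂ : List (BDart V)} :
    IsWalk G x (l₁ ++ l₂) y ↔ ∃ z, IsWalk G x l₁ z ∧ IsWalk G z l₂ y := by
  induction l₁ generalizing x with
  | nil => simp only [List.nil_append, IsWalk, exists_eq_left']
  | cons d l₁ ih => simp only [List.cons_append, IsWalk, ih, and_assoc, exists_and_left]

theorem IsWalk.append {z : V} {l₁ l₂ : List (BDart V)} (h₁ : IsWalk G x l₁ z)
    (h₂ : IsWalk G z l₂ y) : IsWalk G x (l₁ ++ l₂) y :=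
  isWalk_append.2 ⟨z, h₁, h₂⟩

theorem isWalk_append_cons {l₁ l₂ : List (BDart V)} {d : BDart V} :
    IsWalk G x (l₁ ++ d :: l₂) y ↔
      IsWalk G x l₁ d.1.1 ∧ Sym2.mk d.1 d.2 ∈ G ∧ IsWalk G d.2.1 l₂ y := by
  simp only [isWalk_append, IsWalk]
  exact ⟨fun ⟨_, h₁, hz, h⟩ => ⟨hz ▸ h₁, h⟩, fun ⟨h₁, h⟩ => ⟨_, h₁, rfl, h⟩⟩

theorem IsWalk.reverse_map_swap (h : IsWalk G x l y) :
    IsWalk G y (l.map Prod.swap).reverse x := by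
  induction l generalizing x with
  | nil => exact Eq.symm h
  | cons d l ih =>
    obtain ⟨hx, hd, hl⟩ := h
    rw [List.map_cons, List.reverse_cons, isWalk_append_cons]
    exact ⟨ih hl, Sym2.eq_swap ▸ hd, hx⟩

theorem isAllPositive_iff_forall_isWalk :
    IsAllPositive G ↔ ∀ x l y, IsWalk G x l y → walkSign l = 1 := by
  refine ⟨fun hG x l y hl => ?_, fun h d hd => ?_⟩
  · induction l generalizing x with
    | nil => exact walkSign_nil
    | cons d l ih => rw [walkSign_cons, hG d hl.2.1, ih _ hl.2.2, one_mul]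
  · simpa only [walkSign_cons, walkSign_nil, mul_one] using h d.1.1 [d] d.2.1 ⟨rfl, hd, rfl⟩

end Walk

section Balance

variable {V : Type} {G : BGraph V} {x y : V} {l : List (BDart V)}

theorem exists_eq_append_of_not_nodup_map {α β : Type*} {f : α → β} {l : List α}
    (h : ¬ (l.map f).Nodup) :
    ∃ l₁ a l₂ b l₃, l = l₁ ++ a :: (l₂ ++ b :: l₃) ∧ f a = f b := by
  induction l with
  | nil => exact absurd List.nodup_nil h
  | cons c l ih =>
    by_cases hc : f c ∈ l.map f
    · obtain ⟨b, hb, hbc⟩ := List.mem_map.1 hc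
      obtain ⟨l₂, l₃, rfl⟩ := List.append_of_mem hb
      exact ⟨[], c, l₂, b, l₃, rfl, hbc.symm⟩
    · obtain ⟨l₁, a, l₂, b, l₃, rfl, hab⟩ := ih fun hl => h (List.nodup_cons.2 ⟨hc, hl⟩)
      exact ⟨c :: l₁, a, l₂, b, l₃, rfl, hab⟩

theorem IsWalk.exists_split_of_not_nodup_vertices (h : IsWalk G x l y)
    (hl : ¬ (l.map fun d => d.1.1).Nodup) :
    ∃ z c w, IsWalk G z c z ∧ IsWalk G x w y ∧ c.length < l.length ∧ w.length < l.length ∧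
      walkSign l = walkSign c * walkSign w := by
  obtain ⟨l₁, d, l₂, e, l₃, rfl, hde⟩ := exists_eq_append_of_not_nodup_map hl
  obtain ⟨h₁, hd, h₂₃⟩ := isWalk_append_cons.1 h
  obtain ⟨h₂, he, h₃⟩ := isWalk_append_cons.1 h₂₃
  refine ⟨d.1.1, d :: l₂, l₁ ++ e :: l₃, ⟨rfl, hd, hde ▸ h₂⟩,
    isWalk_append_cons.2 ⟨hde ▸ h₁, he, h₃⟩, ?_, ?_, ?_⟩
  · simp only [List.length_append, List.length_cons]
    omega
  · simp only [List.length_append, List.length_cons]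
    omega
  · simp only [walkSign_append, walkSign_cons]
    ac_rfl

theorem IsWalk.exists_split_of_not_nodup_edges (h : IsWalk G x l y)
    (hl : ¬ (l.map fun d => Sym2.mk d.1 d.2).Nodup) :
    ∃ z c w, IsWalk G z c z ∧ IsWalk G x w y ∧ c.length < l.length ∧ w.length < l.length ∧
      walkSign l = walkSign c * walkSign w := by
  by_cases hv : (l.map fun d => d.1.1).Nodup
  swap
  · exact h.exists_split_of_not_nodup_vertices hv
  obtain ⟨l₁, d, l₂, e, l₃, rfl, hde⟩ := exists_eq_append_of_not_nodup_map hl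
  have hne : d.1.1 ≠ e.1.1 := by
    intro heq
    simp [List.nodup_append, heq] at hv
  have hswap : e = d.swap := by
    rcases Sym2.eq_iff.1 hde with ⟨hfst, -⟩ | ⟨hfst, hsnd⟩
    · exact absurd (congrArg Prod.fst hfst) hne
    · exact Prod.ext hsnd.symm hfst.symm
  subst hswap
  obtain ⟨h₁, -, h₂₃⟩ := isWalk_append_cons.1 h
  obtain ⟨h₂, -, h₃⟩ := isWalk_append_cons.1 h₂₃
  refine ⟨d.2.1, l₂, l₁ ++ l₃, h₂, h₁.append h₃, ?_, ?_, ?_⟩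
  · simp only [List.length_append, List.length_cons]
    omega
  · simp only [List.length_append, List.length_cons]
    omega
  · simp only [walkSign_append, walkSign_cons, dartSign_swap]
    calc walkSign l₁ * (dartSign d * (walkSign l₂ * (dartSign d * walkSign l₃)))
        = dartSign d * dartSign d * (walkSign l₂ * (walkSign l₁ * walkSign l₃)) := by ac_rfl
      _ = walkSign l₂ * (walkSign l₁ * walkSign l₃) := by rw [Int.units_mul_self, one_mul]

theorem IsWalk.exists_split_of_not_isCycle (h : IsWalk G x l x) (hne : l ≠ [])
    (hl : ¬ IsCycle G x l) :
    ∃ z c w, IsWalk G z c z ∧ IsWalk G x w x ∧ c.length < l.length ∧ w.length < l.length ∧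
      walkSign l = walkSign c * walkSign w := by
  by_cases hv : (l.map fun d => d.1.1).Nodup
  · exact h.exists_split_of_not_nodup_edges fun he => hl ⟨hne, h, he, hv⟩
  · exact h.exists_split_of_not_nodup_vertices hv

theorem IsBalanced.walkSign_eq_one (hG : IsBalanced G) (h : IsWalk G x l x) :
    walkSign l = 1 := by
  induction hn : l.length using Nat.strong_induction_on generalizing x l with
  | _ n ih =>
    subst hn
    by_cases hne : l = []
    · rw [hne, walkSign_nil]
    by_cases hcycle : IsCycle G x l
    · exact hG x l hcycle
    obtain ⟨z, c, w, hc, hw, hcl, hwl, hsign⟩ := h.exists_split_of_not_isCycle hne hcycle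
    rw [hsign, ih _ hcl hc rfl, ih _ hwl hw rfl, one_mul]

theorem isBalanced_iff_forall_isWalk :
    IsBalanced G ↔ ∀ x l, IsWalk G x l x → walkSign l = 1 :=
  ⟨fun hG _ _ hl => hG.walkSign_eq_one hl, fun h x l hl => h x l hl.2.1⟩

end Balance

section TransitiveClosure

variable {V : Type} {G : BGraph V} {x y : V} {α β : ℤˣ} {l : List (BDart V)}

theorem IsBWalk.tail {d e : BDart V} (h : IsBWalk G x α (d :: e :: l) y β) :
    IsBWalk G d.2.1 (-d.2.2) (e :: l) y β := by
  obtain ⟨-, hwalk, -, hlast, hchain⟩ := h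
  obtain ⟨hde, htail⟩ := List.isChain_cons_cons.1 hchain
  have hsign : e.1.2 = -d.2.2 := Units.ext (eq_neg_of_add_eq_zero_right hde)
  refine ⟨List.cons_ne_nil e l, hwalk.2.2, ?_, ?_, htail⟩
  · simpa only [List.head?_cons, Option.mem_some_iff, forall_eq'] using hsign
  · simpa only [List.getLast?_cons_cons] using hlast

theorem IsBWalk.walkSign_eq (h : IsBWalk G x α l y β) : walkSign l = -(α * β) := by
  induction l generalizing x α with
  | nil => exact absurd rfl h.1
  | cons d l ih =>
    obtain rfl : d.1.2 = α := h.2.2.1 d rfl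
    cases l with
    | nil =>
      obtain rfl : d.2.2 = β := h.2.2.2.1 d rfl
      rw [walkSign_cons, walkSign_nil, mul_one, dartSign]
    | cons e l =>
      calc walkSign (d :: e :: l)
          = -(d.1.2 * d.2.2) * -(-d.2.2 * β) := by rw [walkSign_cons, ih h.tail, dartSign]
        _ = -(d.1.2 * (d.2.2 * d.2.2) * β) := by
          simp only [neg_mul, neg_neg, mul_assoc]
        _ = -(d.1.2 * β) := by rw [Int.units_mul_self, mul_one]

theorem exists_isWalk_of_mem_Ft {d : BDart V} (hd : Sym2.mk d.1 d.2 ∈ Ft G) :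
    ∃ l, IsWalk G d.1.1 l d.2.1 ∧ walkSign l = dartSign d := by
  obtain ⟨⟨a, α⟩, ⟨b, β⟩⟩ := d
  obtain ⟨x, α', y, β', l, hl, hends⟩ := hd
  have hwalk : IsWalk G x l y := hl.1.2.1
  have hsign : walkSign l = -(α' * β') := hl.1.walkSign_eq
  rcases Sym2.eq_iff.1 hends with ⟨⟨⟩, ⟨⟩⟩ | ⟨⟨⟩, ⟨⟩⟩
  · exact ⟨l, hwalk, hsign⟩
  · refine ⟨(l.map Prod.swap).reverse, hwalk.reverse_map_swap, ?_⟩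
    rw [walkSign_reverse_map_swap, hsign, dartSign, mul_comm]

theorem IsWalk.exists_isWalk_of_Ft (h : IsWalk (Ft G) x l y) :
    ∃ l', IsWalk G x l' y ∧ walkSign l' = walkSign l := by
  induction l generalizing x with
  | nil => exact ⟨[], h, rfl⟩
  | cons d l ih =>
    obtain ⟨rfl, hd, hl⟩ := h
    obtain ⟨p, hp, hpd⟩ := exists_isWalk_of_mem_Ft hd
    obtain ⟨q, hq, hql⟩ := ih hl
    exact ⟨p ++ q, hp.append hq, by rw [walkSign_append, walkSign_cons, hpd, hql]⟩

end TransitiveClosure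

theorem stmt9_general {V : Type} (G : BGraph V) :
    (IsAllPositive G → IsAllPositive (Ft G)) ∧ (IsBalanced G → IsBalanced (Ft G)) := by
  simp only [isAllPositive_iff_forall_isWalk, isBalanced_iff_forall_isWalk]
  constructor
  · intro hG x l y hl
    obtain ⟨l', hl', hsign⟩ := hl.exists_isWalk_of_Ft
    exact hsign ▸ hG x l' y hl'
  · intro hG x l hl
    obtain ⟨l', hl', hsign⟩ := hl.exists_isWalk_of_Ft
    exact hsign ▸ hG x l' hl'

/-- The transitive closure of an all-positive bidirected graph is all
positive, and the transitive closure of a balanced bidirected graph is balanced. -/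
theorem stmt9 {V : Type} [Fintype V] (G : BGraph V) :
    (IsAllPositive G → IsAllPositive (Ft G)) ∧ (IsBalanced G → IsBalanced (Ft G)) :=
  stmt9_general G
end

section
/- If G_τ is a connected bidirected graph, then every transitive reduction Rt(G_τ) is connected. -/
/-- Connectedness of the underlying graph of a bidirected graph. -/
def Connected {V : Type} (G : BGraph V) : Prop := ∀ x y : V, ∃ l, IsWalk G x l y

/-!
Every edge of `ft G H` is an edge of `H` or has the same ends as some b-path of `H`. Replacing each
edge of a walk of `ft G H` in this way, and forgetting the sign condition at the vertices where the
replacements meet, gives a walk of `H` with the same ends.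
-/

/-- `Reachable G x y` : the vertices `x` and `y` lie in the same connected component of the
underlying graph of `G`. Signs are ignored, and the walk may be empty. -/
def Reachable {V : Type} (G : BGraph V) (x y : V) : Prop := ∃ l, IsWalk G x l y

section

variable {V : Type} {G H : BGraph V} {x y z : V} {l m : List (BDart V)}

theorem IsWalk.append_s13 (hl : IsWalk G x l y) (hm : IsWalk G y m z) : IsWalk G x (l ++ m) z := by
  induction l generalizing x with
  | nil =>
    obtain rfl : x = y := hl
    exact hm
  | cons d l ih =>
    obtain ⟨hx, hd, hl⟩ := hl
    exact ⟨hx, hd, ih hl⟩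

theorem isWalk_singleton {a b : SV V} (hab : s(a, b) ∈ G) : IsWalk G a.1 [(a, b)] b.1 :=
  ⟨rfl, hab, rfl⟩

theorem IsWalk.reverse (hl : IsWalk G x l y) : IsWalk G y (l.map Prod.swap).reverse x := by
  induction l generalizing x with
  | nil => exact Eq.symm hl
  | cons d l ih =>
    obtain ⟨rfl, hd, hl⟩ := hl
    rw [List.map_cons, List.reverse_cons]
    exact (ih hl).append_s13 (isWalk_singleton (Sym2.eq_swap ▸ hd))

theorem Reachable.symm (h : Reachable G x y) : Reachable G y x :=
  let ⟨_, hl⟩ := h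
  ⟨_, hl.reverse⟩

theorem Reachable.trans (hxy : Reachable G x y) (hyz : Reachable G y z) : Reachable G x z :=
  let ⟨_, hl⟩ := hxy
  let ⟨_, hm⟩ := hyz
  ⟨_, hl.append_s13 hm⟩

theorem IsWalk.reachable_of_forall_mem (hl : IsWalk G x l y)
    (hGH : ∀ a b : SV V, s(a, b) ∈ G → Reachable H a.1 b.1) : Reachable H x y := by
  induction l generalizing x with
  | nil => exact ⟨[], hl⟩
  | cons d l ih =>
    obtain ⟨rfl, hd, hl⟩ := hl
    exact (hGH d.1 d.2 hd).trans (ih hl)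

theorem reachable_of_mem_ft {a b : SV V} (hab : s(a, b) ∈ ft G H) : Reachable H a.1 b.1 := by
  obtain hab | ⟨-, x, α, y, β, l, hpath, hends⟩ := hab
  · exact ⟨_, isWalk_singleton hab⟩
  · have hxy : Reachable H x y := ⟨l, hpath.1.2.1⟩
    obtain ⟨rfl, rfl⟩ | ⟨rfl, rfl⟩ := Sym2.eq_iff.1 hends
    · exact hxy
    · exact hxy.symm

end

theorem stmt13_general {V : Type} (G H : BGraph V) (hconn : Connected (ft G H)) : Connected H := by
  intro x y
  obtain ⟨l, hl⟩ := hconn x y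
  exact hl.reachable_of_forall_mem fun _ _ => reachable_of_mem_ft

/-- If `G` is a connected bidirected graph, then every transitive
reduction of `G` is connected. -/
theorem stmt13 {V : Type} [Fintype V] (G H : BGraph V) (hconn : Connected G)
    (h : IsTR G H) : Connected H := by
  exact stmt13_general G H (h.2.1.symm ▸ hconn)
end

section
/- A connected signed graph G_σ is quasibalanced if, and only if, every two negative cycles C and C′ of G_σ satisfy |V(C) ∩ V(C′)| ≥ 2. -/
/-- A signed graph on vertex type `V` and edge type `E`: each edge `e` has two
ends `ends e true` and `ends e false` (so loops and multiple edges are allowed)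
and a sign `sgn e : ℤˣ`. -/
structure SGraph (V E : Type) where
  ends : E → Bool → V
  sgn : E → ℤˣ

namespace SGraph

variable {V E : Type}

/-- The initial vertex of a dart (an edge together with a direction of traversal). -/
def src (G : SGraph V E) (d : E × Bool) : V := G.ends d.1 d.2

/-- The terminal vertex of a dart. -/
def dst (G : SGraph V E) (d : E × Bool) : V := G.ends d.1 (!d.2)

/-- `G.IsWalk x l y` : the list of darts `l` forms a chain from `x` to `y` in `G`. -/
def IsWalk (G : SGraph V E) : V → List (E × Bool) → V → Prop
  | x, [], y => x = y
  | x, d :: l, y => G.src d = x ∧ IsWalk G (G.dst d) l y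

/-- A cycle at `x` : a nonempty closed chain whose edges are pairwise distinct and
whose vertices are pairwise distinct. -/
def IsCycle (G : SGraph V E) (x : V) (l : List (E × Bool)) : Prop :=
  l ≠ [] ∧ G.IsWalk x l x ∧ (l.map Prod.fst).Nodup ∧ (l.map G.src).Nodup

/-- The sign of a chain : the product of the signs of its edges. -/
def chainSign (G : SGraph V E) (l : List (E × Bool)) : ℤˣ :=
  (l.map fun d => G.sgn d.1).prod

/-- A signed graph is balanced if every cycle is positive. -/
def Balanced (G : SGraph V E) : Prop :=
  ∀ x l, G.IsCycle x l → G.chainSign l = 1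

/-- The signed graph obtained by negating the sign of every edge. -/
def neg (G : SGraph V E) : SGraph V E := ⟨G.ends, fun e => -(G.sgn e)⟩

/-- A signed graph is antibalanced if negating all edge signs yields a balanced
signed graph. -/
def Antibalanced (G : SGraph V E) : Prop := G.neg.Balanced

end SGraph

namespace SGraph

variable {V E : Type}

/-- The vertex set of a closed chain `l` (the set of its sources). -/
def vSet (G : SGraph V E) (l : List (E × Bool)) : Set V := {v | v ∈ l.map G.src}

/-- The edge set of a chain. -/
def eSet (l : List (E × Bool)) : Set E := {e | e ∈ l.map Prod.fst}

/-- A negative cycle. -/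
def IsNegCycle (G : SGraph V E) (x : V) (l : List (E × Bool)) : Prop :=
  G.IsCycle x l ∧ G.chainSign l = -1

/-- Type (ii) configuration : the union of two (distinct) negative cycles having
exactly one common vertex. -/
def TypeII (G : SGraph V E) : Prop :=
  ∃ x l x' l' v, G.IsNegCycle x l ∧ G.IsNegCycle x' l' ∧ eSet l ≠ eSet (E := E) l' ∧
    G.vSet l ∩ G.vSet l' = {v}

/-- An elementary chain from `x` to `y` (no repeated vertices). -/
def IsPath (G : SGraph V E) (x : V) (l : List (E × Bool)) (y : V) : Prop :=
  G.IsWalk x l y ∧ (x :: l.map G.dst).Nodup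

/-- Type (iii) configuration : the union of two vertex-disjoint negative cycles and
an elementary chain connecting them which is internally disjoint from both cycles. -/
def TypeIII (G : SGraph V E) : Prop :=
  ∃ x l x' l' a p b, G.IsNegCycle x l ∧ G.IsNegCycle x' l' ∧
    G.vSet l ∩ G.vSet l' = ∅ ∧ G.IsPath a p b ∧ a ∈ G.vSet l ∧ b ∈ G.vSet l' ∧
    ∀ v ∈ (p.map G.dst).dropLast, v ∉ G.vSet l ∪ G.vSet l'

/-- A signed graph is quasibalanced if it contains no configuration of type (ii)
or of type (iii). -/
def Quasibalanced (G : SGraph V E) : Prop := ¬ G.TypeII ∧ ¬ G.TypeIII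

/-- Connectedness of the underlying graph. -/
def Connected (G : SGraph V E) : Prop := ∀ x y : V, ∃ l, G.IsWalk x l y

end SGraph

/- A walk of minimal length between two vertex sets repeats no vertex and meets the two sets only
at its ends, since otherwise a proper segment of it, or a shortcut past the repetition, would be
shorter. Hence two disjoint negative cycles of a connected graph always belong to a configuration of
type (iii), and two negative cycles sharing fewer than two vertices yield a forbidden configuration.
Conversely, the vertices of a closed chain are the ends of its edges, so the two disjoint cycles of
a configuration of type (iii) have distinct edge sets. -/

namespace SGraph

variable {V E : Type} {G : SGraph V E} {x y x' y' v a b : V} {l l' p : List (E × Bool)}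
  {A B : Set V}

theorem isWalk_append {l₁ l₂ : List (E × Bool)} :
    G.IsWalk x (l₁ ++ l₂) y ↔ ∃ z, G.IsWalk x l₁ z ∧ G.IsWalk z l₂ y := by
  induction l₁ generalizing x with
  | nil => simp [IsWalk]
  | cons d l ih => simp [IsWalk, ih, and_assoc]

theorem IsWalk.exists_append_of_mem_map_dst (h : G.IsWalk x l y) (hv : v ∈ l.map G.dst) :
    ∃ l₁ l₂, l = l₁ ++ l₂ ∧ l₁ ≠ [] ∧ G.IsWalk x l₁ v ∧ G.IsWalk v l₂ y := by
  obtain ⟨d, hd, rfl⟩ := List.mem_map.1 hv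
  obtain ⟨l₁, l₂, rfl⟩ := List.append_of_mem hd
  obtain ⟨z, h₁, hz, h₂⟩ := isWalk_append.1 h
  exact ⟨l₁ ++ [d], l₂, by simp, by simp, isWalk_append.2 ⟨z, h₁, hz, rfl⟩, h₂⟩

theorem IsWalk.exists_append_of_mem_dropLast_map_dst (h : G.IsWalk x l y)
    (hv : v ∈ (l.map G.dst).dropLast) :
    ∃ l₁ l₂, l = l₁ ++ l₂ ∧ l₁ ≠ [] ∧ l₂ ≠ [] ∧ G.IsWalk x l₁ v ∧ G.IsWalk v l₂ y := by
  rw [← List.map_dropLast] at hv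
  have hl : l ≠ [] := by rintro rfl; simp at hv
  rw [← List.dropLast_append_getLast hl] at h
  obtain ⟨z, hinit, hlast⟩ := isWalk_append.1 h
  obtain ⟨l₁, l₂, hl₁₂, hl₁, h₁, h₂⟩ := hinit.exists_append_of_mem_map_dst hv
  refine ⟨l₁, l₂ ++ [l.getLast hl], ?_, hl₁, by simp, h₁, isWalk_append.2 ⟨z, h₂, hlast⟩⟩
  rw [← List.append_assoc, ← hl₁₂, List.dropLast_append_getLast]

/-- `p` is a walk from `a ∈ A` to `b ∈ B` that is shortest among all walks from a vertex of `A`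
to a vertex of `B`, whatever their end vertices. -/
structure IsShortestWalk (G : SGraph V E) (A B : Set V) (a : V) (p : List (E × Bool)) (b : V) :
    Prop where
  isWalk : G.IsWalk a p b
  source_mem : a ∈ A
  target_mem : b ∈ B
  length_le : ∀ ⦃a' p' b'⦄, a' ∈ A → b' ∈ B → G.IsWalk a' p' b' → p.length ≤ p'.length

theorem IsWalk.exists_isShortestWalk (h : G.IsWalk x l y) (hx : x ∈ A) (hy : y ∈ B) :
    ∃ a p b, G.IsShortestWalk A B a p b := by
  obtain ⟨p, ⟨a, ha, b, hb, hp⟩, hmin⟩ := exists_minimalFor_of_wellFoundedLT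
    (fun p => ∃ a ∈ A, ∃ b ∈ B, G.IsWalk a p b) List.length ⟨l, x, hx, y, hy, h⟩
  refine ⟨a, p, b, hp, ha, hb, fun a' p' b' ha' hb' hp' => ?_⟩
  exact (le_total _ _).elim id (hmin ⟨a', ha', b', hb', hp'⟩)

theorem IsShortestWalk.tail {d : E × Bool} (h : G.IsShortestWalk A B a (d :: p) b) :
    G.IsShortestWalk {G.dst d} B (G.dst d) p b where
  isWalk := h.isWalk.2
  source_mem := rfl
  target_mem := h.target_mem
  length_le := by
    rintro _ p' b' rfl hb' hp'
    have hle := h.length_le h.source_mem hb' (p' := d :: p') ⟨h.isWalk.1, hp'⟩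
    simpa using hle

theorem IsShortestWalk.isPath (h : G.IsShortestWalk A B a p b) : G.IsPath a p b := by
  refine ⟨h.isWalk, ?_⟩
  induction p generalizing A a with
  | nil => simp
  | cons d p ih =>
    refine List.nodup_cons.2 ⟨fun ha => ?_, ih h.tail⟩
    obtain ⟨l₁, l₂, hl, hl₁, -, h₂⟩ := h.isWalk.exists_append_of_mem_map_dst ha
    have hle := h.length_le h.source_mem h.target_mem h₂
    have hpos := List.length_pos_of_ne_nil hl₁
    rw [hl, List.length_append] at hle
    omega

theorem IsShortestWalk.notMem_union_of_mem_dropLast_map_dst (h : G.IsShortestWalk A B a p b)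
    (hv : v ∈ (p.map G.dst).dropLast) : v ∉ A ∪ B := by
  obtain ⟨l₁, l₂, rfl, hl₁, hl₂, h₁, h₂⟩ := h.isWalk.exists_append_of_mem_dropLast_map_dst hv
  have hlen : (l₁ ++ l₂).length = l₁.length + l₂.length := List.length_append
  have hpos₁ := List.length_pos_of_ne_nil hl₁
  have hpos₂ := List.length_pos_of_ne_nil hl₂
  rintro (hA | hB)
  · have hle := h.length_le hA h.target_mem h₂
    omega
  · have hle := h.length_le h.source_mem hB h₁
    omega

theorem IsWalk.map_src_append_singleton (h : G.IsWalk x l y) :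
    l.map G.src ++ [y] = x :: l.map G.dst := by
  induction l generalizing x with
  | nil => simpa using h.symm
  | cons d l ih => simp [h.1, ih h.2]

theorem IsWalk.map_src_perm_map_dst (h : G.IsWalk x l x) : (l.map G.src).Perm (l.map G.dst) := by
  have hperm := List.perm_append_singleton x (l.map G.src)
  rw [h.map_src_append_singleton] at hperm
  exact hperm.symm.cons_inv

theorem IsWalk.vSet_eq_iUnion_range_ends (h : G.IsWalk x l x) :
    G.vSet l = ⋃ e ∈ eSet l, Set.range (G.ends e) := by
  have hmem : ∀ d ∈ l, ∀ c, G.ends d.1 c ∈ G.vSet l := by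
    intro d hd c
    rcases Bool.eq_or_eq_not c d.2 with rfl | rfl
    · exact List.mem_map_of_mem (f := G.src) hd
    · exact h.map_src_perm_map_dst.mem_iff.2 (List.mem_map_of_mem hd)
  apply Set.Subset.antisymm
  · intro v hv
    obtain ⟨d, hd, rfl⟩ := List.mem_map.1 hv
    exact Set.mem_biUnion (List.mem_map_of_mem hd) ⟨d.2, rfl⟩
  · refine Set.iUnion₂_subset fun e he => ?_
    obtain ⟨d, hd, rfl⟩ := List.mem_map.1 he
    exact Set.range_subset_iff.2 (hmem d hd)

theorem vSet_nonempty (hl : l ≠ []) : (G.vSet l).Nonempty :=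
  List.exists_mem_of_ne_nil _ (by simpa using hl)

theorem finite_vSet (G : SGraph V E) (l : List (E × Bool)) : (G.vSet l).Finite :=
  List.finite_toSet _

theorem IsWalk.eSet_ne_of_vSet_inter_eq_empty (h : G.IsWalk x l x) (hl : l ≠ [])
    (h' : G.IsWalk x' l' x') (hdisj : G.vSet l ∩ G.vSet l' = ∅) : eSet l ≠ eSet l' := by
  intro heq
  have hvSet : G.vSet l = G.vSet l' := by
    rw [h.vSet_eq_iUnion_range_ends, h'.vSet_eq_iUnion_range_ends, heq]
  rw [← hvSet, Set.inter_self] at hdisj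
  exact (vSet_nonempty hl).ne_empty hdisj

theorem two_le_ncard_vSet_inter_iff :
    2 ≤ (G.vSet l ∩ G.vSet l').ncard ↔ (G.vSet l ∩ G.vSet l').Nontrivial :=
  Set.one_lt_ncard_iff_nontrivial_and_finite.trans
    (and_iff_left ((G.finite_vSet l).inter_of_left _))

theorem Connected.typeIII_of_vSet_inter_eq_empty (hconn : G.Connected) (h : G.IsNegCycle x l)
    (h' : G.IsNegCycle x' l') (hdisj : G.vSet l ∩ G.vSet l' = ∅) : G.TypeIII := by
  obtain ⟨u, hu⟩ := G.vSet_nonempty h.1.1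
  obtain ⟨w, hw⟩ := G.vSet_nonempty h'.1.1
  obtain ⟨q, hq⟩ := hconn u w
  obtain ⟨a, p, b, hp⟩ := hq.exists_isShortestWalk hu hw
  exact ⟨x, l, x', l', a, p, b, h, h', hdisj, hp.isPath, hp.source_mem, hp.target_mem,
    fun _ => hp.notMem_union_of_mem_dropLast_map_dst⟩

end SGraph

theorem stmt19_general {V E : Type} (G : SGraph V E) (hconn : G.Connected) :
    G.Quasibalanced ↔
      ∀ x l x' l', G.IsNegCycle x l → G.IsNegCycle x' l' →
        SGraph.eSet (E := E) l ≠ SGraph.eSet (E := E) l' →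
        2 ≤ (G.vSet l ∩ G.vSet l').ncard := by
  simp only [SGraph.two_le_ncard_vSet_inter_iff]
  constructor
  · rintro ⟨hII, hIII⟩ x l x' l' h h' hne
    by_contra hnontrivial
    rcases (Set.not_nontrivial_iff.1 hnontrivial).eq_empty_or_singleton with hdisj | ⟨v, hv⟩
    · exact hIII (hconn.typeIII_of_vSet_inter_eq_empty h h' hdisj)
    · exact hII ⟨x, l, x', l', v, h, h', hne, hv⟩
  · intro hinter
    constructor
    · rintro ⟨x, l, x', l', v, h, h', hne, hv⟩
      exact Set.not_nontrivial_singleton (hv ▸ hinter x l x' l' h h' hne)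
    · rintro ⟨x, l, x', l', -, -, -, h, h', hdisj, -⟩
      have ⟨hl, hwalk, _⟩ := h.1
      have hne := hwalk.eSet_ne_of_vSet_inter_eq_empty hl h'.1.2.1 hdisj
      exact Set.not_nontrivial_empty (hdisj ▸ hinter x l x' l' h h' hne)

/-- A connected signed graph `G` is quasibalanced if, and only if,
every two (distinct) negative cycles `C` and `C'` of `G` satisfy `|V(C) ∩ V(C')| ≥ 2`. -/
theorem stmt19 {V E : Type} [Fintype V] [Fintype E] (G : SGraph V E)
    (hconn : G.Connected) :
    G.Quasibalanced ↔
      ∀ x l x' l', G.IsNegCycle x l → G.IsNegCycle x' l' →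
        SGraph.eSet (E := E) l ≠ SGraph.eSet (E := E) l' →
        2 ≤ (G.vSet l ∩ G.vSet l').ncard :=
  stmt19_general G hconn
end
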